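/- arXiv:1911.12432 — 2 statements merged into one kernel-verified Lean document; each statement's English description precedes it below -/
import Mathlib

section
/- Let e₁,…,e_m be an enumeration of E with w(e₁) ≥ w(e₂) ≥ … ≥ w(e_m), and define M recursively by M₀=∅ and Mᵢ = M_{i−1}∪{eᵢ} if M_{i−1}∪{eᵢ} is a d-distance matching, Mᵢ = M_{i−1} otherwise; let M = M_m (the output of the greedy algorithm). Then 3·w(M) ≥ w(M*) for every d-distance matching M* of G. -/
open Finset

/-- `M` is a `d`-distance matching of the bipartite graph with left node set `Fin n`
(ordered) and right node set `T`, whose edge set is `E`. -/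
def DDM {n : ℕ} {T : Type*} [DecidableEq T] (d : ℕ) (E M : Finset (Fin n × T)) : Prop :=
  M ⊆ E ∧ (∀ e ∈ M, ∀ f ∈ M, e.1 = f.1 → e = f) ∧
    (∀ e ∈ M, ∀ f ∈ M, e.2 = f.2 → e ≠ f → d ≤ Nat.dist e.1.val f.1.val)

open Classical in
/-- The greedy algorithm: scan the edges in the given order and add an edge whenever the
result is still a feasible `d`-distance matching. -/
noncomputable def greedyList {n : ℕ} {T : Type*} [DecidableEq T] (d : ℕ)
    (E : Finset (Fin n × T)) :
    List (Fin n × T) → Finset (Fin n × T) → Finset (Fin n × T)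
  | [], M => M
  | e :: rest, M =>
      greedyList d E rest (if DDM d E (insert e M) then insert e M else M)

/-- Two edges conflict if they share their left node, or share their right node while their
left nodes are at distance less than `d`. -/
def EdgeConflict {n : ℕ} {T : Type*} (d : ℕ) (e f : Fin n × T) : Prop :=
  e.1 = f.1 ∨ (e.2 = f.2 ∧ Nat.dist e.1.val f.1.val < d)

lemma DDM.insert_of_forall_not_conflict {n : ℕ} {T : Type*} [DecidableEq T] {d : ℕ}
    {E M : Finset (Fin n × T)} (hM : DDM d E M) {e : Fin n × T} (he : e ∈ E)
    (h : ∀ f ∈ M, ¬ EdgeConflict d e f) : DDM d E (insert e M) := by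
  obtain ⟨hME, hleft, hright⟩ := hM
  simp only [EdgeConflict, not_or, not_and, not_lt] at h
  refine ⟨insert_subset he hME, ?_, ?_⟩
  · intro a ha b hb hab
    rcases mem_insert.1 ha with rfl | haM <;> rcases mem_insert.1 hb with rfl | hbM
    · rfl
    · exact absurd hab (h b hbM).1
    · exact absurd hab.symm (h a haM).1
    · exact hleft a haM b hbM hab
  · intro a ha b hb hab hne
    rcases mem_insert.1 ha with rfl | haM <;> rcases mem_insert.1 hb with rfl | hbM
    · exact absurd rfl hne
    · exact (h b hbM).2 hab
    · rw [Nat.dist_comm]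
      exact (h a haM).2 hab.symm
    · exact hright a haM b hbM hab hne

lemma subset_greedyList {n : ℕ} {T : Type*} [DecidableEq T] (d : ℕ)
    (E : Finset (Fin n × T)) (l : List (Fin n × T)) (M : Finset (Fin n × T)) :
    M ⊆ greedyList d E l M := by
  induction l generalizing M with
  | nil => exact Subset.refl M
  | cons e l ih =>
    rw [greedyList]
    refine Subset.trans ?_ (ih _)
    split_ifs
    · exact subset_insert e M
    · exact Subset.refl M

lemma DDM.greedyList {n : ℕ} {T : Type*} [DecidableEq T] {d : ℕ}
    {E M : Finset (Fin n × T)} (hM : DDM d E M) (l : List (Fin n × T)) :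
    DDM d E (greedyList d E l M) := by
  induction l generalizing M with
  | nil => exact hM
  | cons e l ih =>
    rw [_root_.greedyList]
    split_ifs with h
    · exact ih h
    · exact ih hM

/-- Every scanned edge conflicts with an edge of the greedy solution of at least its weight. -/
lemma exists_conflict_mem_greedyList {n : ℕ} {T : Type*} [DecidableEq T] {d : ℕ}
    {E M : Finset (Fin n × T)} {w : Fin n × T → ℝ} {l : List (Fin n × T)}
    (hM : DDM d E M) (hl : ∀ e ∈ l, e ∈ E) (hsort : l.Pairwise (fun e f => w f ≤ w e))
    (hMl : ∀ f ∈ M, ∀ e ∈ l, w e ≤ w f) :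
    ∀ e ∈ l, ∃ f ∈ greedyList d E l M, w e ≤ w f ∧ EdgeConflict d e f := by
  induction l generalizing M with
  | nil => simp
  | cons a l ih =>
    obtain ⟨hal, hsort⟩ := List.pairwise_cons.1 hsort
    have hlE : ∀ e ∈ l, e ∈ E := fun e he => hl e (List.mem_cons_of_mem a he)
    have hMl' : ∀ f ∈ M, ∀ e ∈ l, w e ≤ w f :=
      fun f hf e he => hMl f hf e (List.mem_cons_of_mem a he)
    intro e he
    rw [greedyList]
    split_ifs with h
    · rcases List.mem_cons.1 he with rfl | he
      · exact ⟨e, subset_greedyList d E l _ (mem_insert_self e M), le_rfl, Or.inl rfl⟩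
      · refine ih h hlE hsort (fun f hf b hb => ?_) e he
        rcases mem_insert.1 hf with rfl | hfM
        · exact hal b hb
        · exact hMl' f hfM b hb
    · rcases List.mem_cons.1 he with rfl | he
      · by_contra! hcon
        exact h (hM.insert_of_forall_not_conflict (hl e List.mem_cons_self) fun f hf =>
          hcon f (subset_greedyList d E l M hf) (hMl f hf e List.mem_cons_self))
      · exact ih hM hlE hsort hMl' e he

/-- An edge conflicts with at most three edges of a `d`-distance matching. -/
lemma DDM.card_le_three_of_conflict {n : ℕ} {T : Type*} [DecidableEq T] {d : ℕ}
    {E M A : Finset (Fin n × T)} (hM : DDM d E M) (hA : A ⊆ M) {f : Fin n × T}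
    (h : ∀ e ∈ A, EdgeConflict d e f) : #A ≤ 3 := by
  obtain ⟨-, hleft, hright⟩ := hM
  have hcover : A ⊆ {e ∈ A | e.1 = f.1} ∪ ({e ∈ A | e.1 < f.1 ∧ e.2 = f.2 ∧
      Nat.dist e.1.val f.1.val < d} ∪ {e ∈ A | f.1 < e.1 ∧ e.2 = f.2 ∧
      Nat.dist e.1.val f.1.val < d}) := by
    intro e he
    simp only [mem_union, mem_filter]
    rcases h e he with h | h
    · exact Or.inl ⟨he, h⟩
    · rcases lt_trichotomy e.1 f.1 with h' | h' | h'
      · exact Or.inr (Or.inl ⟨he, h', h⟩)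
      · exact Or.inl ⟨he, h'⟩
      · exact Or.inr (Or.inr ⟨he, h', h⟩)
  have hsame : #{e ∈ A | e.1 = f.1} ≤ 1 := by
    refine card_le_one.2 fun a ha b hb => ?_
    rw [mem_filter] at ha hb
    exact hleft a (hA ha.1) b (hA hb.1) (ha.2.trans hb.2.symm)
  have hbelow : #{e ∈ A | e.1 < f.1 ∧ e.2 = f.2 ∧ Nat.dist e.1.val f.1.val < d} ≤ 1 := by
    refine card_le_one.2 fun a ha b hb => ?_
    rw [mem_filter, Fin.lt_def] at ha hb
    by_contra hne
    have hab := hright a (hA ha.1) b (hA hb.1) (ha.2.2.1.trans hb.2.2.1.symm) hne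
    simp only [Nat.dist] at ha hb hab
    omega
  have habove : #{e ∈ A | f.1 < e.1 ∧ e.2 = f.2 ∧ Nat.dist e.1.val f.1.val < d} ≤ 1 := by
    refine card_le_one.2 fun a ha b hb => ?_
    rw [mem_filter, Fin.lt_def] at ha hb
    by_contra hne
    have hab := hright a (hA ha.1) b (hA hb.1) (ha.2.2.1.trans hb.2.2.1.symm) hne
    simp only [Nat.dist] at ha hb hab
    omega
  calc #A ≤ _ := card_le_card hcover
    _ ≤ _ := card_union_le _ _
    _ ≤ 1 + (1 + 1) :=
        Nat.add_le_add hsame ((card_union_le _ _).trans (Nat.add_le_add hbelow habove))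

/-- `Greedy`, run on the edges listed in non-increasing order of weight, is a
3-approximation algorithm for the weighted `d`-distance matching problem. -/
theorem stmt2 {n : ℕ} {T : Type*} [DecidableEq T]
    (d : ℕ) (hd : 1 ≤ d) (E : Finset (Fin n × T)) (w : Fin n × T → ℝ)
    (hw : ∀ e ∈ E, 0 ≤ w e)
    (l : List (Fin n × T)) (hnd : l.Nodup) (hlE : l.toFinset = E)
    (hsort : l.Pairwise (fun e f => w f ≤ w e)) :
    ∀ Ms, DDM d E Ms → ∑ e ∈ Ms, w e ≤ 3 * ∑ e ∈ greedyList d E l ∅, w e := by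
  intro Ms hMs
  have hempty : DDM d E ∅ := by simp [DDM]
  have hconf : ∀ e ∈ E, ∃ f ∈ greedyList d E l ∅, w e ≤ w f ∧ EdgeConflict d e f := by
    intro e he
    refine exists_conflict_mem_greedyList hempty (fun a ha => ?_) hsort (by simp) e ?_
    · rw [← hlE]
      exact List.mem_toFinset.2 ha
    · rw [← hlE] at he
      exact List.mem_toFinset.1 he
  choose! φ hφ hwφ hcφ using hconf
  calc ∑ e ∈ Ms, w e ≤ ∑ e ∈ Ms, w (φ e) := sum_le_sum fun e he => hwφ e (hMs.1 he)
    _ = ∑ f ∈ greedyList d E l ∅, ∑ e ∈ Ms with φ e = f, w (φ e) :=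
        (sum_fiberwise_of_maps_to (fun e he => hφ e (hMs.1 he)) _).symm
    _ ≤ ∑ f ∈ greedyList d E l ∅, 3 * w f := by
        refine sum_le_sum fun f hf => ?_
        have hcard : #{e ∈ Ms | φ e = f} ≤ 3 := by
          refine hMs.card_le_three_of_conflict (filter_subset _ _) (f := f) fun e he => ?_
          obtain ⟨heMs, rfl⟩ := mem_filter.1 he
          exact hcφ e (hMs.1 heMs)
        rw [sum_congr rfl fun e he => congrArg w (mem_filter.1 he).2, sum_const, nsmul_eq_mul]
        exact mul_le_mul_of_nonneg_right (by exact_mod_cast hcard)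
          (hw f ((hempty.greedyList l).1 hf))
    _ = 3 * ∑ e ∈ greedyList d E l ∅, w e := (mul_sum _ _ _).symm
end

section
/- There exist a rational optimal solution x ∈ ℚ₊^E of LP1 and an order e₁=s¹t¹,…,e_m=sᵐtᵐ of the edges of G that is (2 − 1/(2d−1))-flat with respect to x. -/
open Finset

/-- `x` is a feasible solution of LP1: `x ≥ 0`, supported on `E`,
`Σ_{e ∈ Δ(s)} x_e ≤ 1` for every `s ∈ S`, and
`Σ_{s't ∈ E, s' ∈ R_d(s)} x_{s't} ≤ 1` for every `s ∈ S`, `t ∈ T`. -/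
def FeasLP1 {n : ℕ} {T : Type*} [DecidableEq T] {R : Type*} [Field R] [LinearOrder R] [IsStrictOrderedRing R]
    (d : ℕ) (E : Finset (Fin n × T)) (x : Fin n × T → R) : Prop :=
  (∀ e, 0 ≤ x e) ∧ (∀ e ∉ E, x e = 0) ∧
  (∀ s : Fin n, ∑ e ∈ E.filter (fun e => e.1 = s), x e ≤ 1) ∧
  (∀ s : Fin n, ∀ t : T,
    ∑ e ∈ E.filter (fun e => e.2 = t ∧ s.val ≤ e.1.val ∧ e.1.val < s.val + d), x e ≤ 1)

/-- The list `l` of edges `e₁, …, e_m` is a `θ`-flat order with respect to `x`: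
for every `i`, `ξᵢ + ξ̄ᵢ ≤ θ − x_{eᵢ}`, where `ξᵢ` sums `x` over the later edges sharing
the `S`-node of `eᵢ`, and `ξ̄ᵢ` sums `x` over the later edges at the `T`-node of `eᵢ`
whose `S`-node lies in `L_d(sⁱ) ∪ R_d(sⁱ)`. -/
def IsFlatOrder {n : ℕ} {T : Type*} [DecidableEq T] {R : Type*} [Field R] [LinearOrder R] [IsStrictOrderedRing R]
    (d : ℕ) (θ : R) (x : Fin n × T → R) (l : List (Fin n × T)) : Prop :=
  ∀ i : Fin l.length,
    (∑ j ∈ Finset.univ.filter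
        (fun j : Fin l.length => i < j ∧ (l.get j).1 = (l.get i).1), x (l.get j)) +
    (∑ j ∈ Finset.univ.filter
        (fun j : Fin l.length => i < j ∧ (l.get j).2 = (l.get i).2 ∧
          Nat.dist (l.get j).1.val (l.get i).1.val < d), x (l.get j))
    ≤ θ - x (l.get i)

/-- Rational-linear functionals on `ℝ` with value `1` at `1` approximate the identity pointwise. -/
theorem exists_seq_ratLinear_tendsto :
    ∃ φ : ℕ → ℝ →ₗ[ℚ] ℚ, (∀ᶠ k in Filter.atTop, φ k 1 = 1) ∧
      ∀ v : ℝ, Filter.Tendsto (fun k => ((φ k v : ℚ) : ℝ)) Filter.atTop (nhds v) := by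
  let b := Module.Basis.ofVectorSpace ℚ ℝ
  choose u _ _ hu using fun i => Real.exists_seq_rat_strictAnti_tendsto (b i)
  let ψ : ℕ → ℝ →ₗ[ℚ] ℚ := fun k => b.constr ℚ (fun i => u i k)
  have hψ (v : ℝ) : Filter.Tendsto (fun k => ((ψ k v : ℚ) : ℝ)) Filter.atTop (nhds v) := by
    have h1 : ∀ k, ((ψ k v : ℚ) : ℝ) = ∑ i ∈ (b.repr v).support, (b.repr v i : ℝ) * (u i k : ℝ) := by
      intro k
      simp [ψ, Module.Basis.constr_apply, Finsupp.sum]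
    have h2 : v = ∑ i ∈ (b.repr v).support, (b.repr v i : ℝ) * b i := by
      conv_lhs => rw [← b.linearCombination_repr v]
      simp [Finsupp.linearCombination_apply, Finsupp.sum, Rat.smul_def]
    simp only [h1]
    conv => rhs; rw [h2]
    exact tendsto_finsetSum _ fun i _ => (hu i).const_mul _
  refine ⟨fun k => (ψ k 1)⁻¹ • ψ k, ?_, fun v => ?_⟩
  · filter_upwards [(hψ 1).eventually_ne one_ne_zero] with k hk
    have : ψ k 1 ≠ 0 := by exact_mod_cast hk
    simp [this]
  · have := ((hψ 1).inv₀ one_ne_zero).mul (hψ v)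
    simpa using this

/-- A packing polytope `{x ≥ 0, x = 0 off E, ∑_{e ∈ A} x e ≤ 1 for A ∈ C}` whose constraint sets
cover `E` has a rational point maximizing a given real linear objective. -/
theorem exists_rat_optimal_packing {α : Type*} (E : Finset α) (C : Finset (Finset α))
    (hcover : ∀ e ∈ E, ∃ A ∈ C, e ∈ A) (w : α → ℝ) :
    ∃ x : α → ℚ, ((∀ e, 0 ≤ x e) ∧ (∀ e ∉ E, x e = 0) ∧ ∀ A ∈ C, ∑ e ∈ A, x e ≤ 1) ∧
      ∀ y : α → ℝ, (∀ e, 0 ≤ y e) → (∀ e ∉ E, y e = 0) → (∀ A ∈ C, ∑ e ∈ A, y e ≤ 1) →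
        ∑ e ∈ E, w e * y e ≤ ∑ e ∈ E, w e * (x e : ℝ) := by
  let P : Set (α → ℝ) :=
    {y | (∀ e, 0 ≤ y e) ∧ (∀ e ∉ E, y e = 0) ∧ ∀ A ∈ C, ∑ e ∈ A, y e ≤ 1}
  have hclosed : IsClosed P := by
    have : P = (⋂ e, {y | 0 ≤ y e}) ∩ (⋂ e ∈ {e | e ∉ E}, {y | y e = 0}) ∩
        ⋂ A ∈ C, {y : α → ℝ | ∑ e ∈ A, y e ≤ 1} := by
      ext y; simp [P, and_assoc]
    rw [this]
    refine ((isClosed_iInter fun e => ?_).inter (isClosed_biInter fun e _ => ?_)).inter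
      (isClosed_biInter fun A _ => ?_)
    · exact isClosed_le continuous_const (continuous_apply e)
    · exact isClosed_eq (continuous_apply e) continuous_const
    · exact isClosed_le (by fun_prop) continuous_const
  have hcompact : IsCompact P := by
    refine (isCompact_univ_pi fun _ : α => isCompact_Icc (a := (0 : ℝ)) (b := 1)).of_isClosed_subset
      hclosed ?_
    rintro y ⟨h0, hE, hC⟩ e -
    refine ⟨h0 e, ?_⟩
    by_cases he : e ∈ E
    · obtain ⟨A, hA, heA⟩ := hcover e he
      exact (single_le_sum (fun f _ => h0 f) heA).trans (hC A hA)
    · simp [hE e he]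
  obtain ⟨y, ⟨h0, hE, hC⟩, hmax⟩ := hcompact.exists_isMaxOn
    (f := fun y : α → ℝ => ∑ e ∈ E, w e * y e) ⟨0, by simp [P]⟩ (by fun_prop)
  obtain ⟨φ, hφ1, hφ⟩ := exists_seq_ratLinear_tendsto
  have hnonneg : ∀ᶠ k in Filter.atTop, ∀ e ∈ E,
      0 ≤ (φ k (y e) : ℝ) ∧ 0 ≤ 2 * y e - (φ k (y e) : ℝ) := by
    refine (Filter.eventually_all_finset E).2 fun e _ => ?_
    rcases (h0 e).eq_or_lt with h | h
    · simp [← h]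
    · filter_upwards [(hφ (y e)).eventually_const_lt h,
        (hφ (y e)).eventually_lt_const (show y e < 2 * y e by linarith)] with k h1 h2
      exact ⟨h1.le, by linarith⟩
  have hpack : ∀ᶠ k in Filter.atTop, ∀ A ∈ C,
      ∑ e ∈ A, (φ k (y e) : ℝ) ≤ 1 ∧ ∑ e ∈ A, (2 * y e - (φ k (y e) : ℝ)) ≤ 1 := by
    refine (Filter.eventually_all_finset C).2 fun A hA => ?_
    have hsum : ∀ k, ∑ e ∈ A, (φ k (y e) : ℝ) = (φ k (∑ e ∈ A, y e) : ℝ) := by simp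
    simp only [sum_sub_distrib, ← mul_sum, hsum]
    rcases (hC A hA).eq_or_lt with h | h
    · filter_upwards [hφ1] with k hk
      rw [h, hk]
      norm_num
    · have hlim := hφ (∑ e ∈ A, y e)
      filter_upwards [hlim.eventually_lt_const h,
        hlim.eventually_const_lt (show 2 * (∑ e ∈ A, y e) - 1 < ∑ e ∈ A, y e by linarith)]
        with k h1 h2
      exact ⟨h1.le, by linarith⟩
  obtain ⟨k, hk1, hk2⟩ := (hnonneg.and hpack).exists
  refine ⟨fun e => φ k (y e), ⟨fun e => ?_, fun e he => by simp [hE e he], fun A hA => ?_⟩,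
    fun v hv0 hvE hvC => (hmax (show v ∈ P from ⟨hv0, hvE, hvC⟩)).trans ?_⟩
  · by_cases he : e ∈ E
    · exact_mod_cast (hk1 e he).1
    · simp [hE e he]
  · exact_mod_cast (hk2 A hA).1
  · have hrefl : (fun e => 2 * y e - (φ k (y e) : ℝ)) ∈ P := by
      refine ⟨fun e => ?_, fun e he => by simp [hE e he], fun A hA => (hk2 A hA).2⟩
      by_cases he : e ∈ E
      · exact (hk1 e he).2
      · simp [hE e he]
    have h := hmax hrefl
    simp only [Set.mem_ofPred_eq, mul_sub, sum_sub_distrib, mul_left_comm _ (2 : ℝ),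
      ← mul_sum] at h ⊢
    linarith

section FlatOrder

variable {n : ℕ} {T : Type*} [DecidableEq T] {R : Type*} [Field R] [LinearOrder R]
  [IsStrictOrderedRing R]

/-- Summing over the positions of a list without repetitions is summing over its elements. -/
theorem sum_get_eq_sum_toFinset {α M : Type*} [DecidableEq α] [AddCommMonoid M] {l : List α}
    (hl : l.Nodup) (p : α → Prop) [DecidablePred p] (x : α → M) :
    ∑ j : Fin l.length, (if p (l.get j) then x (l.get j) else 0) =
      ∑ f ∈ l.toFinset with p f, x f := by
  rw [sum_filter, List.sum_toFinset _ hl, ← Fin.sum_univ_fun_getElem]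
  rfl

/-- Prepending an edge to a flat order, when that edge satisfies the flatness inequality against
all the edges of the order. -/
theorem IsFlatOrder.cons {d : ℕ} {θ : R} {x : Fin n × T → R} {e : Fin n × T}
    {l : List (Fin n × T)} (hl : l.Nodup) (hflat : IsFlatOrder d θ x l)
    (he : ∑ f ∈ l.toFinset with f.1 = e.1, x f +
      ∑ f ∈ l.toFinset with f.2 = e.2 ∧ Nat.dist f.1.val e.1.val < d, x f ≤ θ - x e) :
    IsFlatOrder d θ x (e :: l) := by
  intro i
  refine Fin.cases ?_ (fun i => ?_) i
  · rw [← sum_get_eq_sum_toFinset hl, ← sum_get_eq_sum_toFinset hl] at he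
    simp only [sum_filter, List.length_cons, Fin.sum_univ_succ]
    simpa using he
  · have := hflat i
    simpa [sum_filter, Fin.sum_univ_succ] using this

/-- If every nonempty set of edges contains one that may come first, a flat order exists. -/
theorem exists_isFlatOrder_of_peel {d : ℕ} {θ : R} {x : Fin n × T → R} {E : Finset (Fin n × T)}
    (hpeel : ∀ F ⊆ E, F.Nonempty → ∃ e ∈ F, ∑ f ∈ F.erase e with f.1 = e.1, x f +
      ∑ f ∈ F.erase e with f.2 = e.2 ∧ Nat.dist f.1.val e.1.val < d, x f ≤ θ - x e) :
    ∃ l : List (Fin n × T), l.Nodup ∧ l.toFinset = E ∧ IsFlatOrder d θ x l := by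
  induction E using Finset.strongInduction with
  | H E ih =>
    rcases E.eq_empty_or_nonempty with rfl | hE
    · exact ⟨[], List.nodup_nil, rfl, fun i => i.elim0⟩
    · obtain ⟨e, he, hle⟩ := hpeel E subset_rfl hE
      obtain ⟨l, hl, hlE, hflat⟩ := ih (E.erase e) (erase_ssubset he)
        fun F hF => hpeel F (hF.trans (erase_subset e E))
      refine ⟨e :: l, List.nodup_cons.2 ⟨?_, hl⟩, ?_, hflat.cons hl (hlE ▸ hle)⟩
      · rw [← List.mem_toFinset, hlE]
        exact notMem_erase e E
      · rw [List.toFinset_cons, hlE, insert_erase he]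

/-- Among the edges at the leftmost `S`-node of `F`, some edge may come first in a flat order. -/
theorem FeasLP1.exists_peel {d : ℕ} (hd : 1 ≤ d) {E : Finset (Fin n × T)} {x : Fin n × T → R}
    (hx : FeasLP1 d E x) {F : Finset (Fin n × T)} (hFE : F ⊆ E) (hF : F.Nonempty) :
    ∃ e ∈ F, ∑ f ∈ F.erase e with f.1 = e.1, x f +
      ∑ f ∈ F.erase e with f.2 = e.2 ∧ Nat.dist f.1.val e.1.val < d, x f ≤
        2 - 1 / (2 * (d : R) - 1) - x e := by
  obtain ⟨h0, -, hS, hT⟩ := hx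
  obtain ⟨e₀, he₀, hmin⟩ := F.exists_min_image Prod.fst hF
  set s := e₀.1 with hs
  let Fs := F.filter fun f => f.1 = s
  let N : Fin n × T → Finset (Fin n × T) := fun e =>
    (F.erase e).filter fun f => f.2 = e.2 ∧ Nat.dist f.1.val e.1.val < d
  have hle : ∀ {A B : Finset (Fin n × T)}, A ⊆ B → ∑ f ∈ A, x f ≤ ∑ f ∈ B, x f := fun h =>
    sum_le_sum_of_subset_of_nonneg h fun f _ _ => h0 f
  have hFs1 : ∑ f ∈ Fs, x f ≤ 1 := (hle (filter_subset_filter _ hFE)).trans (hS s)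
  have hstar : ∀ e ∈ Fs, ∑ f ∈ F.erase e with f.1 = e.1, x f + x e = ∑ f ∈ Fs, x f := by
    intro e he
    rw [← sum_erase_add _ _ he, (mem_filter.1 he).2, filter_erase]
  have hN1 : ∀ e ∈ Fs, ∑ f ∈ N e, x f + x e ≤ 1 := by
    intro e he
    obtain ⟨heF, hes⟩ := mem_filter.1 he
    have hnot : e ∉ N e := by simp [N]
    rw [add_comm, ← sum_insert hnot]
    refine (hle ?_).trans (hT s e.2)
    intro f hf
    have hfF : f ∈ F := by
      rcases mem_insert.1 hf with rfl | hf
      · exact heF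
      · exact mem_of_mem_erase (mem_filter.1 hf).1
    have hsf : s.val ≤ f.1.val := hmin f hfF
    refine mem_filter.2 ⟨hFE hfF, ?_⟩
    rcases mem_insert.1 hf with rfl | hf
    · exact ⟨rfl, hsf, by rw [hes]; omega⟩
    · obtain ⟨-, h2, h3⟩ := mem_filter.1 hf
      rw [hes, Nat.dist] at h3
      exact ⟨h2, hsf, by omega⟩
  have hdisj : (Fs : Set (Fin n × T)).PairwiseDisjoint N := by
    intro e he e' he' hne
    refine disjoint_left.2 fun f hf hf' => hne ?_
    have h1 := (mem_filter.1 he).2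
    have h1' := (mem_filter.1 he').2
    exact Prod.ext (h1.trans h1'.symm)
      ((mem_filter.1 hf).2.1.symm.trans (mem_filter.1 hf').2.1)
  let W : Finset (Fin n) := univ.filter fun r => s.val < r.val ∧ r.val < s.val + d
  have hWcard : (W.card : R) ≤ d - 1 := by
    have : W.card ≤ d - 1 := by
      calc W.card = (W.map Fin.valEmbedding).card := (card_map _).symm
        _ ≤ (Ioo s.val (s.val + d)).card := card_le_card fun a ha => by
            obtain ⟨r, hr, rfl⟩ := mem_map.1 ha
            simpa [W] using hr
        _ = d - 1 := by simp
    have h : W.card + 1 ≤ d := by omega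
    have h' : ((W.card + 1 : ℕ) : R) ≤ d := by exact_mod_cast h
    push_cast at h'
    linarith
  have hNsum : ∑ e ∈ Fs, ∑ f ∈ N e, x f ≤ d - 1 := by
    rw [← sum_biUnion hdisj]
    have hmaps : ∀ f ∈ Fs.biUnion N, f.1 ∈ W := by
      intro f hf
      obtain ⟨e, he, hfe⟩ := mem_biUnion.1 hf
      obtain ⟨hfF, h2, h3⟩ := mem_filter.1 hfe
      have hes := (mem_filter.1 he).2
      have hsf : s ≤ f.1 := hmin f (mem_of_mem_erase hfF)
      have hne : s ≠ f.1 := fun h => ne_of_mem_erase hfF (Prod.ext (h.symm.trans hes.symm) h2)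
      rw [hes, Nat.dist] at h3
      have hlt : s.val < f.1.val := Fin.lt_def.1 (lt_of_le_of_ne hsf hne)
      exact mem_filter.2 ⟨mem_univ _, hlt, by omega⟩
    rw [← sum_fiberwise_of_maps_to hmaps]
    calc ∑ r ∈ W, ∑ f ∈ Fs.biUnion N with f.1 = r, x f ≤ ∑ _r ∈ W, (1 : R) := by
          refine sum_le_sum fun r _ => (hle (filter_subset_filter _ ?_)).trans (hS r)
          refine biUnion_subset.2 fun e _ => ?_
          exact (filter_subset _ _).trans ((erase_subset _ _).trans hFE)
      _ ≤ d - 1 := by simpa using hWcard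
  by_contra! hbad
  set c : R := 1 / (2 * (d : R) - 1) with hc
  have hbad' : ∀ e ∈ Fs, 2 - c < ∑ f ∈ Fs, x f + ∑ f ∈ N e, x f := fun e he => by
    have h1 := hbad e (mem_filter.1 he).1
    have h2 := hstar e he
    have h3 : ∑ f ∈ F.erase e with f.2 = e.2 ∧ Nat.dist f.1.val e.1.val < d, x f =
      ∑ f ∈ N e, x f := rfl
    linarith
  have he₀s : e₀ ∈ Fs := mem_filter.2 ⟨he₀, rfl⟩
  have hcard : Fs.card • (1 - c) ≤ (d : R) - 1 :=
    (card_nsmul_le_sum _ _ _ fun e he => by linarith [hbad' e he]).trans hNsum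
  have hXc : ∑ f ∈ Fs, x f ≤ Fs.card • c :=
    sum_le_card_nsmul _ _ _ fun e he => by linarith [hbad' e he, hN1 e he]
  have hX : 1 - c < ∑ f ∈ Fs, x f := by linarith [hbad' e₀ he₀s, hN1 e₀ he₀s, h0 e₀]
  rw [nsmul_eq_mul] at hcard hXc
  rcases hd.eq_or_lt with rfl | hd2
  · have hc1 : c = 1 := by norm_num [hc]
    have hN0 : ∑ f ∈ N e₀, x f ≤ 0 :=
      (single_le_sum (f := fun e => ∑ f ∈ N e, x f)
        (fun e _ => sum_nonneg fun f _ => h0 f) he₀s).trans (by simpa using hNsum)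
    linarith [hbad' e₀ he₀s]
  · have hd2' : (2 : R) ≤ d := by exact_mod_cast hd2
    have hcD : c * (2 * (d : R) - 1) = 1 := one_div_mul_cancel (by linarith)
    have hcpos : 0 < c := by rw [hc]; exact one_div_pos.2 (by linarith)
    have hc3 : 3 * c ≤ 1 := by nlinarith
    have hd1 : (d : R) - 1 = (1 - c) * (2 * (d : R) - 1) / 2 := by linarith
    rw [hd1, mul_comm (1 - c), mul_div_right_comm] at hcard
    have hk : (Fs.card : R) ≤ (2 * (d : R) - 1) / 2 := le_of_mul_le_mul_right hcard (by linarith)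
    have := mul_le_mul_of_nonneg_right hk hcpos.le
    linarith

end FlatOrder

/-- There exist a rational optimal solution `x` of LP1 and an order of the edges that is
`(2 − 1/(2d−1))`-flat with respect to `x`. -/
theorem stmt5 {n : ℕ} {T : Type*} [DecidableEq T]
    (d : ℕ) (hd : 1 ≤ d) (E : Finset (Fin n × T))
    (w : Fin n × T → ℝ) (hw : ∀ e ∈ E, 0 ≤ w e) :
    ∃ x : Fin n × T → ℚ, FeasLP1 d E x ∧
      (∀ y : Fin n × T → ℝ, FeasLP1 d E y →
        ∑ e ∈ E, w e * y e ≤ ∑ e ∈ E, w e * (x e : ℝ)) ∧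
      ∃ l : List (Fin n × T), l.Nodup ∧ l.toFinset = E ∧
        IsFlatOrder d (2 - 1 / (2 * (d : ℚ) - 1)) x l := by
  classical
  let star : Fin n → Finset (Fin n × T) := fun s => E.filter fun e => e.1 = s
  let window : Fin n → T → Finset (Fin n × T) := fun s t =>
    E.filter fun e => e.2 = t ∧ s.val ≤ e.1.val ∧ e.1.val < s.val + d
  let C := E.powerset.filter fun A => (∃ s, A = star s) ∨ ∃ s t, A = window s t
  have hstar : ∀ s, star s ∈ C := fun s =>
    mem_filter.2 ⟨mem_powerset.2 (filter_subset _ _), .inl ⟨s, rfl⟩⟩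
  have hwindow : ∀ s t, window s t ∈ C := fun s t =>
    mem_filter.2 ⟨mem_powerset.2 (filter_subset _ _), .inr ⟨s, t, rfl⟩⟩
  obtain ⟨x, ⟨h0, hE, hC⟩, hmax⟩ := exists_rat_optimal_packing E C
    (fun e he => ⟨star e.1, hstar e.1, mem_filter.2 ⟨he, rfl⟩⟩) w
  have hx : FeasLP1 d E x :=
    ⟨h0, hE, fun s => hC _ (hstar s), fun s t => hC _ (hwindow s t)⟩
  refine ⟨x, hx, fun y hy => hmax y hy.1 hy.2.1 fun A hA => ?_,
    exists_isFlatOrder_of_peel fun F hF hne => hx.exists_peel hd hF hne⟩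
  rcases (mem_filter.1 hA).2 with ⟨s, rfl⟩ | ⟨s, t, rfl⟩
  · exact hy.2.2.1 s
  · exact hy.2.2.2 s t
end
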